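/- arXiv:1404.2671 — 2 statements merged into one kernel-verified Lean document; each statement's English description precedes it below -/
import Mathlib

section
/- Let 0 < r_{n−1} < r_n, b_{n−1} > b_n > 0, α_{n−1} > 0 and d_{n−1} ∈ ℝ, and let P_{n−1}(d) = α_n(d)·∫_0^d e^{r_n·x/b_n} dx + α_{n−1}·∫_d^{d_{n−1}} e^{r_{n−1}·x/b_{n−1}} dx with α_n(d) = α_{n−1}·(b_{n−1}/b_n)·e^{(r_{n−1}/b_{n−1} − r_n/b_n)·d}. Then the point d* = (b_n/r_n)·ln( (b_{n−1}·r_n − b_n·r_{n−1}) / (b_n·(r_n − r_{n−1})) ) is well defined (the argument of the logarithm is > 1), satisfies d* > 0, the derivative of P_{n−1} vanishes at d*, and d* is the unique global maximizer of P_{n−1} on ℝ. -/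
/-!
The derivative of the objective factors as a positive multiple of
`L - exp (r₂ d / b₂)`, where `L = (b₁ r₂ - b₂ r₁) / (b₂ (r₂ - r₁))`: the exponential
`exp (r₁ d / b₁)` coming from the lower limit of the second integral is
`exp ((r₁ / b₁ - r₂ / b₂) d) * exp (r₂ d / b₂)`, so `exp ((r₁ / b₁ - r₂ / b₂) d)` comes out of every
term. The remaining factor decreases strictly in `d` and vanishes exactly when
`d = (b₂ / r₂) log L`.
-/

theorem lt_of_deriv_pos_of_deriv_neg {f : ℝ → ℝ} {c x : ℝ} (hf : Continuous f)
    (hpos : ∀ y < c, 0 < deriv f y) (hneg : ∀ y, c < y → deriv f y < 0) (hx : x ≠ c) :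
    f x < f c := by
  rcases hx.lt_or_gt with hlt | hgt
  · have hmono : StrictMonoOn f (Set.Iic c) :=
      strictMonoOn_of_deriv_pos (convex_Iic c) hf.continuousOn
        (by simpa only [interior_Iic, Set.mem_Iio] using hpos)
    exact hmono hlt.le Set.self_mem_Iic hlt
  · have hanti : StrictAntiOn f (Set.Ici c) :=
      strictAntiOn_of_deriv_neg (convex_Ici c) hf.continuousOn
        (by simpa only [interior_Ici, Set.mem_Ioi] using hneg)
    exact hanti Set.self_mem_Ici hgt.le hgt

theorem integral_exp_mul_div {r b : ℝ} (hr : r ≠ 0) (hb : b ≠ 0) (u v : ℝ) :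
    ∫ x in u..v, Real.exp (r * x / b) =
      b / r * (Real.exp (r * v / b) - Real.exp (r * u / b)) := by
  have hrb : r / b ≠ 0 := div_ne_zero hr hb
  simp only [mul_div_right_comm, intervalIntegral.integral_comp_mul_left Real.exp hrb, integral_exp,
    inv_div, smul_eq_mul]

/-- The objective `P_{n-1}(d)` for the last breakpoint, with `r1 = r_{n-1}`, `r2 = r_n`,
`b1 = b_{n-1}`, `b2 = b_n`, `alpha = α_{n-1}`, `dprev = d_{n-1}` and `α_n(d)` eliminated by means of
`α_n b_n e^{(r_n/b_n) d} = α_{n-1} b_{n-1} e^{(r_{n-1}/b_{n-1}) d}`. -/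
noncomputable def breakpointObjective (r1 r2 b1 b2 alpha dprev d : ℝ) : ℝ :=
  alpha * (b1 / b2) * Real.exp ((r1 / b1 - r2 / b2) * d) *
      (∫ x in (0 : ℝ)..d, Real.exp (r2 * x / b2)) +
    alpha * ∫ x in d..dprev, Real.exp (r1 * x / b1)

/-- The argument of the logarithm in the closed form of the last breakpoint. -/
noncomputable def breakpointRatio (r1 r2 b1 b2 : ℝ) : ℝ :=
  (b1 * r2 - b2 * r1) / (b2 * (r2 - r1))

/-- The closed form of the last breakpoint `d_n`. -/
noncomputable def lastBreakpoint (r1 r2 b1 b2 : ℝ) : ℝ :=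
  b2 / r2 * Real.log (breakpointRatio r1 r2 b1 b2)

section

variable {r1 r2 b1 b2 : ℝ}

theorem hasDerivAt_breakpointObjective (hr2 : r2 ≠ 0) (hr12 : r1 ≠ r2) (hb1 : b1 ≠ 0)
    (hb2 : b2 ≠ 0) (alpha dprev d : ℝ) :
    HasDerivAt (breakpointObjective r1 r2 b1 b2 alpha dprev)
      (alpha * ((r2 - r1) / r2) * Real.exp ((r1 / b1 - r2 / b2) * d) *
        (breakpointRatio r1 r2 b1 b2 - Real.exp (r2 * d / b2))) d := by
  have hcoeff : HasDerivAt (fun d ↦ alpha * (b1 / b2) * Real.exp ((r1 / b1 - r2 / b2) * d))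
      (alpha * (b1 / b2) * (Real.exp ((r1 / b1 - r2 / b2) * d) * (r1 / b1 - r2 / b2))) d :=
    (hasDerivAt_const_mul (r1 / b1 - r2 / b2)).exp.const_mul _
  have hupper : HasDerivAt (fun d ↦ ∫ x in (0 : ℝ)..d, Real.exp (r2 * x / b2))
      (Real.exp (r2 * d / b2)) d :=
    ((by fun_prop : Continuous fun x ↦ Real.exp (r2 * x / b2)).integral_hasStrictDerivAt
      0 d).hasDerivAt
  have hlower : HasDerivAt (fun d ↦ ∫ x in d..dprev, Real.exp (r1 * x / b1))
      (-Real.exp (r1 * d / b1)) d := by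
    have hcont : Continuous fun x ↦ Real.exp (r1 * x / b1) := by fun_prop
    exact intervalIntegral.integral_hasDerivAt_left (hcont.intervalIntegrable _ _)
      (hcont.stronglyMeasurableAtFilter _ _) hcont.continuousAt
  have hsplit : Real.exp (r1 * d / b1) =
      Real.exp ((r1 / b1 - r2 / b2) * d) * Real.exp (r2 * d / b2) := by
    rw [← Real.exp_add]
    congr 1
    ring
  refine ((hcoeff.mul hupper).add (hlower.const_mul alpha)).congr_deriv ?_
  rw [integral_exp_mul_div hr2 hb2, hsplit, mul_zero, zero_div, Real.exp_zero, breakpointRatio]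
  have hsub : r2 - r1 ≠ 0 := sub_ne_zero.2 hr12.symm
  field_simp
  ring

theorem one_lt_breakpointRatio (hr2 : 0 < r2) (hr12 : r1 < r2) (hb2 : 0 < b2) (hb12 : b2 < b1) :
    1 < breakpointRatio r1 r2 b1 b2 := by
  rw [breakpointRatio, one_lt_div (mul_pos hb2 (sub_pos.2 hr12))]
  linarith [mul_lt_mul_of_pos_right hb12 hr2]

theorem exp_mul_lastBreakpoint_div (hr2 : r2 ≠ 0) (hb2 : b2 ≠ 0)
    (hratio : 0 < breakpointRatio r1 r2 b1 b2) :
    Real.exp (r2 * lastBreakpoint r1 r2 b1 b2 / b2) = breakpointRatio r1 r2 b1 b2 := by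
  have hlog : r2 * lastBreakpoint r1 r2 b1 b2 / b2 = Real.log (breakpointRatio r1 r2 b1 b2) := by
    rw [lastBreakpoint]
    field_simp
  rw [hlog, Real.exp_log hratio]

theorem lastBreakpoint_pos (hr2 : 0 < r2) (hb2 : 0 < b2)
    (hratio : 1 < breakpointRatio r1 r2 b1 b2) : 0 < lastBreakpoint r1 r2 b1 b2 :=
  mul_pos (div_pos hb2 hr2) (Real.log_pos hratio)

theorem dn_unique_maximizer_general {alpha : ℝ} (hr2 : 0 < r2) (hr12 : r1 < r2) (hb2 : 0 < b2)
    (hb12 : b2 < b1) (halpha : 0 < alpha) (dprev : ℝ) :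
    1 < breakpointRatio r1 r2 b1 b2 ∧
    0 < lastBreakpoint r1 r2 b1 b2 ∧
    deriv (breakpointObjective r1 r2 b1 b2 alpha dprev) (lastBreakpoint r1 r2 b1 b2) = 0 ∧
    ∀ d : ℝ, d ≠ lastBreakpoint r1 r2 b1 b2 →
      breakpointObjective r1 r2 b1 b2 alpha dprev d <
        breakpointObjective r1 r2 b1 b2 alpha dprev (lastBreakpoint r1 r2 b1 b2) := by
  have hratio := one_lt_breakpointRatio hr2 hr12 hb2 hb12
  have hderiv := hasDerivAt_breakpointObjective hr2.ne' hr12.ne (hb2.trans hb12).ne' hb2.ne'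
    alpha dprev
  rw [← exp_mul_lastBreakpoint_div hr2.ne' hb2.ne' (one_pos.trans hratio)] at hderiv
  have hfactor (d : ℝ) : 0 < alpha * ((r2 - r1) / r2) * Real.exp ((r1 / b1 - r2 / b2) * d) := by
    have := sub_pos.2 hr12
    positivity
  refine ⟨hratio, lastBreakpoint_pos hr2 hb2 hratio, ?_, fun d hd ↦
    lt_of_deriv_pos_of_deriv_neg
      (continuous_iff_continuousAt.2 fun d ↦ (hderiv d).continuousAt) ?_ ?_ hd⟩
  · rw [(hderiv _).deriv, sub_self, mul_zero]
  · intro y hy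
    rw [(hderiv y).deriv]
    exact mul_pos (hfactor y) (sub_pos.2 (by gcongr))
  · intro y hy
    rw [(hderiv y).deriv]
    exact mul_neg_of_pos_of_neg (hfactor y) (sub_neg.2 (by gcongr))

end

/-- the point
`d* = (b_n/r_n)·log((b_{n-1}·r_n − b_n·r_{n-1})/(b_n·(r_n − r_{n-1})))`
is well defined (the argument of the logarithm exceeds 1), positive, a critical
point of the objective `P_{n-1}`, and its unique global maximizer.
Here `r1 = r_{n-1} < r_n = r2`, `b1 = b_{n-1} > b_n = b2`. -/
theorem dn_unique_maximizer
    (r1 r2 b1 b2 alpha dprev : ℝ)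
    (hr1 : 0 < r1) (hr12 : r1 < r2) (hb2 : 0 < b2) (hb12 : b2 < b1)
    (halpha : 0 < alpha)
    (P : ℝ → ℝ)
    (hP : ∀ d, P d =
      alpha * (b1 / b2) * Real.exp ((r1 / b1 - r2 / b2) * d)
          * (∫ x in (0:ℝ)..d, Real.exp (r2 * x / b2))
        + alpha * ∫ x in d..dprev, Real.exp (r1 * x / b1))
    (dstar : ℝ)
    (hdstar : dstar = b2 / r2 * Real.log ((b1 * r2 - b2 * r1) / (b2 * (r2 - r1)))) :
    1 < (b1 * r2 - b2 * r1) / (b2 * (r2 - r1)) ∧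
    0 < dstar ∧
    deriv P dstar = 0 ∧
    ∀ d : ℝ, d ≠ dstar → P d < P dstar := by
  obtain rfl : P = breakpointObjective r1 r2 b1 b2 alpha dprev := funext hP
  subst hdstar
  exact dn_unique_maximizer_general (hr1.trans hr12) hr12 hb2 hb12 halpha dprev
end

section
/- Let μ be a mixed strategy for MSR and let 0 < a < b ≤ B. If λ_μ(y) > λ_μ(a) for every y ∈ (a,b), then there exists a shop j with μ_j([0,a]) > 0. -/
open MeasureTheory Set

/-- Cost of the pure action `(j, x)` against nature's stopping time `y`. -/
noncomputable def msrCost (r b x y : ℝ) : ℝ := if y < x then r * y else r * x + b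

/-- A mixed strategy of the consumer: a tuple of finite Borel measures on `[0, B]`
(measures on `ℝ` concentrated on `[0, B]`) of total mass `1`. -/
def IsMixed (n : ℕ) (B : ℝ) (μ : ℕ → Measure ℝ) : Prop :=
  (∀ j, IsFiniteMeasure (μ j)) ∧
  (∀ j, μ j (Set.Icc 0 B)ᶜ = 0) ∧
  (∑ j ∈ Finset.range n, (μ j (Set.Icc 0 B)).toReal) = 1

/-- Expected cost of the mixed strategy `μ` against nature's stopping time `y`. -/
noncomputable def expCost (n : ℕ) (r b : ℕ → ℝ) (μ : ℕ → Measure ℝ) (y : ℝ) : ℝ :=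
  ∑ j ∈ Finset.range n, ∫ x, msrCost (r j) (b j) x y ∂(μ j)

/-- Competitive ratio of the mixed strategy `μ`: `sup_{y ∈ (0, B]} C(μ, y) / (r 0 · y)`. -/
noncomputable def ratio (n : ℕ) (r b : ℕ → ℝ) (B : ℝ) (μ : ℕ → Measure ℝ) : ℝ :=
  ⨆ y : Set.Ioc (0 : ℝ) B, expCost n r b μ (y : ℝ) / (r 0 * (y : ℝ))

/-- A mixed strategy is optimal if its competitive ratio is minimal among all
mixed strategies. -/
def IsOptimal (n : ℕ) (r b : ℕ → ℝ) (B : ℝ) (μ : ℕ → Measure ℝ) : Prop :=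
  IsMixed n B μ ∧
  ∀ ν : ℕ → Measure ℝ, IsMixed n B ν → ratio n r b B μ ≤ ratio n r b B ν

/-- `λ_μ(y)`: the gap between the worst-case ratio of `μ` and its ratio at `y`. -/
noncomputable def lamGap (n : ℕ) (r b : ℕ → ℝ) (B : ℝ) (μ : ℕ → Measure ℝ) (y : ℝ) : ℝ :=
  (⨆ t : Set.Ioc (0 : ℝ) B, expCost n r b μ (t : ℝ) / (r 0 * (t : ℝ)))
    - expCost n r b μ y / (r 0 * y)

/-! If no shop has mass on `[0, a]`, then at time `a` the consumer is still renting almost surely, so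
the average cost `C(μ, y) / y` at `y = a` is the mean renting rate `∑ j, μ_j(ℝ) * r_j`. For `y` near
`a` the average cost is at least that rate: up to time `a` nothing is bought, and a purchase made in
`(a, y]` costs at least `min_j b_j > 0`, more than the rent it can save when `y - a` is small. So the
average cost has a local minimum at `a`, that is, `λ_μ` has a local maximum there. -/

open Filter Topology

theorem msrCost_eq_rent_add_price (r b x y : ℝ) :
    msrCost r b x y = r * min x y + (Iic y).indicator (fun _ ↦ b) x := by
  rcases lt_or_ge y x with hyx | hxy
  · simp [msrCost, hyx, hyx.le]
  · simp [msrCost, hxy, hxy.not_gt]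

theorem mul_le_msrCost {r b a x y : ℝ} (hb : 0 ≤ b) (hsaving : r * (y - a) ≤ b) (hax : a ≤ x) :
    r * y ≤ msrCost r b x y := by
  unfold msrCost
  split_ifs with hyx
  · exact le_rfl
  · have hsaved : r * (y - x) ≤ b := by
      rcases le_total 0 r with hr | hr
      · exact (mul_le_mul_of_nonneg_left (sub_le_sub_left hax y) hr).trans hsaving
      · exact (mul_nonpos_of_nonpos_of_nonneg hr (sub_nonneg.2 (not_lt.1 hyx))).trans hb
    linarith

section SingleShop

variable {ν : Measure ℝ} {a : ℝ}

theorem integrable_msrCost [IsFiniteMeasure ν] (hν : ∀ᵐ x ∂ν, a < x) (r b y : ℝ) :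
    Integrable (fun x ↦ msrCost r b x y) ν := by
  have hmin : Integrable (fun x ↦ min x y) ν :=
    .of_mem_Icc (min a y) y (by fun_prop) <| hν.mono fun x hx ↦
      ⟨min_le_min_right y hx.le, min_le_right x y⟩
  simp only [msrCost_eq_rent_add_price]
  exact (hmin.const_mul r).add ((integrable_const b).indicator measurableSet_Iic)

theorem integral_msrCost_of_ae_lt (hν : ∀ᵐ x ∂ν, a < x) (r b : ℝ) :
    ∫ x, msrCost r b x a ∂ν = ν.real univ * (r * a) := by
  have hrent : (fun x ↦ msrCost r b x a) =ᵐ[ν] fun _ ↦ r * a :=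
    hν.mono fun x hx ↦ if_pos hx
  rw [integral_congr_ae hrent, integral_const, smul_eq_mul]

theorem mul_le_integral_msrCost [IsFiniteMeasure ν] (hν : ∀ᵐ x ∂ν, a < x) {r b y : ℝ}
    (hb : 0 ≤ b) (hsaving : r * (y - a) ≤ b) :
    ν.real univ * (r * y) ≤ ∫ x, msrCost r b x y ∂ν := by
  rw [← smul_eq_mul, ← integral_const]
  exact integral_mono_ae (integrable_const _) (integrable_msrCost hν r b y) <|
    hν.mono fun x hx ↦ mul_le_msrCost hb hsaving hx.le

theorem integral_msrCost_div_le [IsFiniteMeasure ν] (hν : ∀ᵐ x ∂ν, a < x) {r b y : ℝ}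
    (ha : a ≠ 0) (hy : 0 < y) (hb : 0 ≤ b) (hsaving : r * (y - a) ≤ b) :
    (∫ x, msrCost r b x a ∂ν) / a ≤ (∫ x, msrCost r b x y ∂ν) / y :=
  calc
    (∫ x, msrCost r b x a ∂ν) / a = ν.real univ * r := by
      rw [integral_msrCost_of_ae_lt hν, ← mul_assoc, mul_div_cancel_right₀ _ ha]
    _ ≤ (∫ x, msrCost r b x y ∂ν) / y := by
      rw [le_div_iff₀ hy, mul_assoc]
      exact mul_le_integral_msrCost hν hb hsaving

end SingleShop

section Strategy

variable {n : ℕ} {r b : ℕ → ℝ} {μ : ℕ → Measure ℝ} {a : ℝ}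

theorem eventually_mul_sub_le (hb : ∀ j < n, 0 < b j) (r : ℕ → ℝ) (a : ℝ) :
    ∀ᶠ y in 𝓝 a, ∀ j < n, r j * (y - a) ≤ b j := by
  refine (eventually_all_finite (finite_Iio n)).2 fun j hj ↦ ?_
  have hcont : ContinuousAt (fun y ↦ r j * (y - a)) a := by fun_prop
  exact (hcont.eventually_lt_const (by simpa using hb j hj)).mono fun _ ↦ le_of_lt

theorem isLocalMin_expCost_div [∀ j, IsFiniteMeasure (μ j)] (hb : ∀ j < n, 0 < b j)
    (ha : 0 < a) (hμ : ∀ j < n, ∀ᵐ x ∂μ j, a < x) :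
    IsLocalMin (fun y ↦ expCost n r b μ y / y) a := by
  filter_upwards [eventually_gt_nhds ha, eventually_mul_sub_le hb r a] with y hy hsaving
  simp only [expCost, Finset.sum_div]
  refine Finset.sum_le_sum fun j hj ↦ ?_
  have hjn := Finset.mem_range.1 hj
  exact integral_msrCost_div_le (hμ j hjn) ha.ne' hy (hb j hjn).le (hsaving j hjn)

theorem lamGap_le_lamGap_iff (hr : 0 < r 0) (B y z : ℝ) :
    lamGap n r b B μ y ≤ lamGap n r b B μ z ↔ expCost n r b μ z / z ≤ expCost n r b μ y / y := by
  simp only [lamGap, sub_le_sub_iff_left, div_mul_eq_div_div_swap, div_le_div_iff_of_pos_right hr]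

theorem msr_gap_forces_mass_initial_general [∀ j, IsFiniteMeasure (μ j)] {B : ℝ} (hr : 0 < r 0)
    (hb : ∀ j < n, 0 < b j) (ha : 0 < a) (h : ¬IsLocalMax (lamGap n r b B μ) a) :
    ∃ j < n, 0 < μ j (Iic a) := by
  by_contra! hzero
  have hlt : ∀ j < n, ∀ᵐ x ∂μ j, a < x := fun j hj ↦ by
    simpa [ae_iff, Iic_def] using hzero j hj
  exact h <| (isLocalMin_expCost_div hb ha hlt).mono fun y ↦ (lamGap_le_lamGap_iff hr B y a).2

end Strategy

theorem IsMixed.measure_Iic_eq_measure_Icc {n : ℕ} {B : ℝ} {μ : ℕ → Measure ℝ}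
    (hμ : IsMixed n B μ) (j : ℕ) (a : ℝ) : μ j (Iic a) = μ j (Icc 0 a) := by
  have hsupp : ∀ᵐ x ∂μ j, x ∈ Icc 0 B := hμ.2.1 j
  refine measure_congr (hsupp.mono fun x hx ↦ propext ?_)
  exact ⟨fun hxa ↦ ⟨hx.1, hxa⟩, And.right⟩

theorem apply_pred_le_of_succ_le {α : Type*} [Preorder α] {n j : ℕ} {f : ℕ → α}
    (hf : ∀ i, i + 1 < n → f (i + 1) ≤ f i) (hj : j < n) : f (n - 1) ≤ f j := by
  have hanti : AntitoneOn f (Iio n) :=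
    antitoneOn_of_succ_le ordConnected_Iio fun i _ _ hi ↦ hf i hi
  exact hanti hj (Nat.sub_one_lt_of_lt hj) (Nat.le_sub_one_of_lt hj)

theorem not_isLocalMax_of_lt_on_Ioo {α β : Type*} [LinearOrder α] [TopologicalSpace α]
    [OrderTopology α] [DenselyOrdered α] [Preorder β] {f : α → β} {a b : α} (hab : a < b)
    (h : ∀ y ∈ Ioo a b, f a < f y) : ¬IsLocalMax f a := fun hmax ↦ by
  have : (𝓝[>] a).NeBot := nhdsGT_neBot_of_exists_gt ⟨b, hab⟩
  obtain ⟨y, hle, hy⟩ := ((hmax.filter_mono nhdsWithin_le_nhds).and (Ioo_mem_nhdsGT hab)).exists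
  exact (h y hy).not_ge hle

/-- if the gap `lamGap` is strictly larger than `lamGap a₀` throughout
`(a₀, b₀)`, then some shop carries positive probability on `[0, a₀]`. -/
theorem msr_gap_forces_mass_initial
    (n : ℕ) (hn : 0 < n) (r b : ℕ → ℝ)
    (hr0 : 0 < r 0)
    (hrmono : ∀ j, j + 1 < n → r j < r (j + 1))
    (hbmono : ∀ j, j + 1 < n → b (j + 1) < b j)
    (hbn : 0 < b (n - 1))
    (B : ℝ) (hB : B = b (n - 1) / r 0)
    (μ : ℕ → Measure ℝ) (hμ : IsMixed n B μ)
    (a₀ b₀ : ℝ) (ha : 0 < a₀) (hab : a₀ < b₀) (hbB : b₀ ≤ B)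
    (h : ∀ y ∈ Set.Ioo a₀ b₀, lamGap n r b B μ a₀ < lamGap n r b B μ y) :
    ∃ j < n, 0 < μ j (Set.Icc 0 a₀) := by
  have := hμ.1
  have hb : ∀ j < n, 0 < b j := fun j hj ↦
    hbn.trans_le (apply_pred_le_of_succ_le (fun i hi ↦ (hbmono i hi).le) hj)
  simpa only [hμ.measure_Iic_eq_measure_Icc] using
    msr_gap_forces_mass_initial_general hr0 hb ha (not_isLocalMax_of_lt_on_Ioo hab h)
end
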